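/- arXiv:1205.6256 — 2 statements merged into one kernel-verified Lean document; each statement's English description precedes it below -/
import Mathlib

section
/- Let L be a finite ULD lattice that is order-isomorphic to the configuration space of a chip firing game CFG(G,O) reaching a unique fixed point, where the directed multigraph G is acyclic. Then the directed graph 𝒢 (on the meet-irreducibles of L) is acyclic. -/
open Classical

section CFGdefs

variable {V : Type*}

/-- Out-degree of a vertex in a directed multigraph with edge multiplicities `E`. -/
noncomputable def outDeg (E : V → V → ℕ) (v : V) : ℕ := ∑ᶠ u, E v u

/-- A vertex is a sink if all its outgoing edges are loops. -/
def IsSink (E : V → V → ℕ) (v : V) : Prop := outDeg E v = E v v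

/-- A vertex is firable in configuration `c`. -/
def Firable (E : V → V → ℕ) (c : V → ℕ) (v : V) : Prop :=
  ¬ IsSink E v ∧ outDeg E v ≤ c v

/-- The result of firing vertex `v` in configuration `c`. -/
noncomputable def fire (E : V → V → ℕ) (c : V → ℕ) (v : V) : V → ℕ :=
  fun u => if u = v then c v - outDeg E v + E v v else c u + E v u

/-- The configuration obtained by firing a list of vertices in order. -/
noncomputable def fireList (E : V → V → ℕ) : (V → ℕ) → List V → (V → ℕ)
  | c, [] => c
  | c, v :: l => fireList E (fire E c v) l

/-- A list of vertices is a valid firing sequence from `c`. -/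
def ValidSeq (E : V → V → ℕ) : (V → ℕ) → List V → Prop
  | _, [] => True
  | c, v :: l => Firable E c v ∧ ValidSeq E (fire E c v) l

/-- `c'` is reachable from `c` by a finite sequence of firings. -/
def Reaches (E : V → V → ℕ) (c c' : V → ℕ) : Prop :=
  ∃ l : List V, ValidSeq E c l ∧ fireList E c l = c'

/-- A configuration with no firable vertex. -/
def FixedPt (E : V → V → ℕ) (c : V → ℕ) : Prop := ∀ v, ¬ Firable E c v

/-- The chip firing game `CFG(G,O)` reaches a unique fixed point. -/
def ReachesUFP (E : V → V → ℕ) (O : V → ℕ) : Prop :=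
  ∃ fp : V → ℕ, Reaches E O fp ∧ FixedPt E fp ∧ ∀ c, Reaches E O c → Reaches E c fp

/-- The game is simple: in every firing sequence from `O` to the fixed point,
each vertex fires at most once. -/
def SimpleCFG (E : V → V → ℕ) (O : V → ℕ) : Prop :=
  ∀ l : List V, ValidSeq E O l → FixedPt E (fireList E O l) → l.Nodup

/-- Single firing step from `c` to `c'` by firing vertex `v`. -/
def FireStep (E : V → V → ℕ) (c : V → ℕ) (v : V) (c' : V → ℕ) : Prop :=
  Firable E c v ∧ fire E c v = c'

/-- The partial order `L` is order-isomorphic to the configuration space of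
`CFG(G,O)` ordered by reachability. -/
def Generates (E : V → V → ℕ) (O : V → ℕ) (L : Type*) [PartialOrder L] : Prop :=
  ∃ f : L ≃ {c : V → ℕ // Reaches E O c},
    ∀ a b : L, a ≤ b ↔ Reaches E (f a).val (f b).val

/-- The support graph is connected (as an undirected graph). -/
def ConnectedG (E : V → V → ℕ) : Prop :=
  ∀ u v : V, Relation.ReflTransGen (fun a b => 0 < E a b ∨ 0 < E b a) u v

/-- The support graph together with its initial data is an Abelian Sandpile Model. -/
def IsASM (E : V → V → ℕ) : Prop :=
  ConnectedG E ∧ ∃ s : V, IsSink E s ∧ (∀ v, IsSink E v → v = s) ∧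
    ∀ v₁ v₂ : V, v₁ ≠ v₂ → v₁ ≠ s → v₂ ≠ s → E v₁ v₂ = E v₂ v₁

/-- The directed multigraph has no directed cycle. -/
def AcyclicG (E : V → V → ℕ) : Prop :=
  ∀ v : V, ¬ Relation.TransGen (fun a b => 0 < E a b) v v

end CFGdefs

/-- `L` is generated by some chip firing game reaching a unique fixed point. -/
def MemLCFG (L : Type*) [PartialOrder L] : Prop :=
  ∃ (V : Type) (_ : Finite V) (E : V → V → ℕ) (O : V → ℕ),
    ReachesUFP E O ∧ Generates E O L

/-- `L` is generated by some Abelian Sandpile Model reaching a unique fixed point. -/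
def MemLASM (L : Type*) [PartialOrder L] : Prop :=
  ∃ (V : Type) (_ : Finite V) (E : V → V → ℕ) (O : V → ℕ),
    IsASM E ∧ ReachesUFP E O ∧ Generates E O L

section Latticedefs

variable {L : Type*} [Lattice L]

/-- `m` is meet-irreducible: it has exactly one upper cover. -/
def MeetIrred (m : L) : Prop := ∃! y, m ⋖ y

/-- `j` is join-irreducible: it has exactly one lower cover. -/
def JoinIrred (j : L) : Prop := ∃! y, y ⋖ j

/-- The set `M_x \ M_y` of meet-irreducibles above `x` but not above `y`. -/
def MsetDiff (x y : L) : Set L := {m | MeetIrred m ∧ x ≤ m ∧ ¬ y ≤ m}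

/-- The set `M \ M_a` of meet-irreducibles not above `a`. -/
def MnotAbove (a : L) : Set L := {m | MeetIrred m ∧ ¬ a ≤ m}

/-- `x⁺`: the join of all upper covers of `x`. -/
noncomputable def uplus [Fintype L] [OrderBot L] (x : L) : L :=
  Finset.univ.sup (fun y => if x ⋖ y then y else ⊥)

/-- `L` is upper locally distributive: for every `x ≠ ⊤` the interval `[x, x⁺]`
is isomorphic to a Boolean lattice (a hypercube). -/
def IsULD (L : Type*) [Lattice L] [Fintype L] [BoundedOrder L] : Prop :=
  ∀ x : L, x ≠ ⊤ → ∃ n : ℕ, Nonempty (↥(Set.Icc x (uplus x)) ≃o Set (Fin n))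

/-- `𝔘_m`: the minimal elements of `{x : ∃ y, x ⋖ y and 𝔪(x,y) = m}`. -/
def Uset (m : L) : Set L :=
  {x | Minimal (fun z => ∃ y, z ⋖ y ∧ MsetDiff z y = {m}) x}

/-- `𝔏_m`: the maximal elements of `{x : a ≰ x for every a ∈ 𝔘_m}`. -/
def Lset (m : L) : Set L :=
  {x | Maximal (fun z => ∀ a ∈ Uset m, ¬ a ≤ z) x}

/-- `(w, e)` is a (non-negative integer) solution of the system `E(m)`. -/
def SolvesE [OrderBot L] (m : L) (w : ℕ) (e : L → ℕ) : Prop :=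
  (Uset m = {(⊥ : L)} → 1 ≤ w) ∧
  (Uset m ≠ {(⊥ : L)} →
    (∀ a ∈ Lset m, (∑ᶠ x ∈ MnotAbove a, e x) < w) ∧
    (∀ a ∈ Uset m, w ≤ ∑ᶠ x ∈ MnotAbove a, e x))

/-- The system `E(m)` has a non-negative integer solution. -/
def HasSolE [OrderBot L] (m : L) : Prop := ∃ w e, SolvesE m w e

/-- The variable `e_{x,m}` occurs in the system `𝔈(m)`. -/
def VarOccurs [OrderBot L] (x m : L) : Prop :=
  MeetIrred m ∧ Uset m ≠ {(⊥ : L)} ∧ ∃ a ∈ Uset m ∪ Lset m, x ∈ MnotAbove a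

/-- `(W, Ee)` is a non-negative integer solution of the system `Ω`. -/
def SolvesOmega [OrderBot L] (W : L → ℕ) (Ee : L → L → ℕ) : Prop :=
  (∀ m : L, MeetIrred m → SolvesE m (W m) (fun x => Ee x m)) ∧
  (∀ m₁ m₂ : L, m₁ ≠ m₂ → VarOccurs m₁ m₂ → VarOccurs m₂ m₁ → Ee m₁ m₂ = Ee m₂ m₁)

/-- The edge relation of the directed graph `𝒢` on the meet-irreducibles. -/
def Gedge (m₁ m₂ : L) : Prop :=
  MeetIrred m₁ ∧ MeetIrred m₂ ∧ ∃ a ∈ Uset m₂, m₁ ∈ MnotAbove a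

end Latticedefs

/-- The system `Ω` has a non-negative integer solution. -/
def HasSolOmega (L : Type*) [Lattice L] [OrderBot L] : Prop :=
  ∃ W Ee, SolvesOmega (L := L) W Ee

/-- The directed graph `𝒢` on the meet-irreducibles is acyclic. -/
def GAcyclic (L : Type*) [Lattice L] : Prop :=
  ∀ m : L, ¬ Relation.TransGen (Gedge (L := L)) m m

section FiringSequences

variable {V : Type*} {E : V → V → ℕ}

lemma validSeq_append {c : V → ℕ} {l₁ l₂ : List V} :
    ValidSeq E c (l₁ ++ l₂) ↔ ValidSeq E c l₁ ∧ ValidSeq E (fireList E c l₁) l₂ := by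
  induction l₁ generalizing c with
  | nil => simp [ValidSeq, fireList]
  | cons v l ih => simp [ValidSeq, fireList, ih, and_assoc]

lemma fireList_append {c : V → ℕ} {l₁ l₂ : List V} :
    fireList E c (l₁ ++ l₂) = fireList E (fireList E c l₁) l₂ := by
  induction l₁ generalizing c with
  | nil => simp [fireList]
  | cons v l ih => simp [fireList, ih]

lemma Firable.fire_of_ne {c : V → ℕ} {v w : V} (hv : Firable E c v) (hvw : v ≠ w) :
    Firable E (fire E c w) v := by
  refine ⟨hv.1, ?_⟩
  have := hv.2
  simp only [fire, if_neg hvw]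
  omega

lemma fire_comm {c : V → ℕ} {v w : V} (hv : Firable E c v) (hw : Firable E c w) :
    fire E (fire E c v) w = fire E (fire E c w) v := by
  have h₁ := hv.2
  have h₂ := hw.2
  funext u
  simp only [fire]
  split_ifs <;> grind

/-- Firing `v` first keeps a valid sequence valid once one occurrence of `v` is removed. -/
lemma ValidSeq.erase {c : V → ℕ} {l : List V} {v : V} (hl : ValidSeq E c l)
    (hv : Firable E c v) : ValidSeq E (fire E c v) (l.erase v) := by
  induction l generalizing c with
  | nil => simp [ValidSeq]
  | cons w l ih =>
    obtain ⟨hw, hl⟩ := hl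
    by_cases hwv : w = v
    · subst hwv
      simpa using hl
    · rw [List.erase_cons_tail (by simpa using hwv)]
      refine ⟨hw.fire_of_ne hwv, ?_⟩
      rw [fire_comm hv hw]
      exact ih hl (hv.fire_of_ne (Ne.symm hwv))

/-- Two valid sequences can be merged: the first can be continued to a valid sequence whose
firing counts are the maximum of the two. -/
lemma ValidSeq.exists_merge {c : V → ℕ} {l₁ l₂ : List V} (h₁ : ValidSeq E c l₁)
    (h₂ : ValidSeq E c l₂) :
    ∃ l₃, ValidSeq E c (l₁ ++ l₃) ∧ ∀ v, l₃.count v = l₂.count v - l₁.count v := by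
  induction l₁ generalizing c l₂ with
  | nil => exact ⟨l₂, by simpa using h₂, by simp⟩
  | cons v l ih =>
    obtain ⟨l₃, h, hc⟩ := ih h₁.2 (h₂.erase h₁.1)
    refine ⟨l₃, ⟨h₁.1, h⟩, fun u => ?_⟩
    rw [hc, List.count_erase, List.count_cons]
    omega

lemma le_fireList_of_count_eq_zero {c : V → ℕ} {l : List V} {v : V} (hv : l.count v = 0) :
    c v ≤ fireList E c l v := by
  induction l generalizing c with
  | nil => simp [fireList]
  | cons w l ih =>
    have hne : v ≠ w := by
      rintro rfl
      simp at hv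
    have : l.count v = 0 := by
      rw [List.count_cons] at hv
      omega
    refine le_trans ?_ (ih this)
    simp [fire, if_neg hne]

/-- Chip balance at a vertex along a valid firing sequence. -/
lemma ValidSeq.balance [Fintype V] {c : V → ℕ} {l : List V} (hl : ValidSeq E c l) (u : V) :
    fireList E c l u + l.count u * outDeg E u = c u + ∑ w, l.count w * E w u := by
  induction l generalizing c with
  | nil => simp [fireList]
  | cons v l ih =>
    have h := ih hl.2
    have hd := hl.1.2
    have hsum : ∑ w, (v :: l).count w * E w u = ∑ w, l.count w * E w u + E v u := by
      simp [List.count_cons, add_mul, Finset.sum_add_distrib]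
    rw [hsum]
    simp only [fireList, List.count_cons, beq_iff_eq]
    by_cases huv : u = v
    · subst huv
      simp only [fire, if_true] at h ⊢
      rw [add_mul]
      omega
    · simp only [fire, if_neg huv, if_neg (Ne.symm huv)] at h ⊢
      rw [add_zero]
      omega

lemma fireList_eq_of_count_eq [Fintype V] {c : V → ℕ} {l₁ l₂ : List V} (h₁ : ValidSeq E c l₁)
    (h₂ : ValidSeq E c l₂) (h : ∀ v, l₁.count v = l₂.count v) :
    fireList E c l₁ = fireList E c l₂ := by
  funext u
  have b₁ := h₁.balance u
  have b₂ := h₂.balance u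
  simp only [h] at b₁
  omega

lemma ValidSeq.not_isSink_of_mem {c : V → ℕ} {l : List V} (hl : ValidSeq E c l) {v : V}
    (hv : v ∈ l) : ¬ IsSink E v := by
  induction l generalizing c with
  | nil => simp at hv
  | cons w l ih =>
    rcases List.mem_cons.1 hv with rfl | h
    · exact hl.1.1
    · exact ih hl.2 h

lemma AcyclicG.wellFounded [Finite V] (hE : AcyclicG E) :
    WellFounded (Relation.TransGen fun a b => 0 < E a b) :=
  haveI : Std.Irrefl (Relation.TransGen fun a b => 0 < E a b) := ⟨hE⟩
  Finite.wellFounded_of_trans_of_irrefl _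

/-- On an acyclic graph the final configuration determines the firing counts. -/
lemma AcyclicG.count_eq [Fintype V] (hE : AcyclicG E) {c : V → ℕ} {l₁ l₂ : List V}
    (h₁ : ValidSeq E c l₁) (h₂ : ValidSeq E c l₂) (h : fireList E c l₁ = fireList E c l₂)
    (v : V) : l₁.count v = l₂.count v := by
  induction v using hE.wellFounded.induction with
  | _ u ih =>
    have hsum : ∑ w, l₁.count w * E w u = ∑ w, l₂.count w * E w u := by
      refine Finset.sum_congr rfl fun w _ => ?_
      rcases Nat.eq_zero_or_pos (E w u) with h0 | hpos
      · simp [h0]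
      · rw [ih w (.single hpos)]
    have b₁ := h₁.balance u
    have b₂ := h₂.balance u
    rw [h, hsum] at b₁
    by_cases hu : IsSink E u
    · rw [List.count_eq_zero_of_not_mem fun hm => h₁.not_isSink_of_mem hm hu,
        List.count_eq_zero_of_not_mem fun hm => h₂.not_isSink_of_mem hm hu]
    · have hloop : E u u = 0 := by
        by_contra h0
        exact hE u (.single (Nat.pos_of_ne_zero h0))
      have hdeg : 0 < outDeg E u := by
        refine Nat.pos_of_ne_zero fun h0 => hu ?_
        rw [IsSink, h0, hloop]
      exact Nat.eq_of_mul_eq_mul_right hdeg (by omega)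

/-- Restricting a valid sequence to a set closed under predecessors keeps it valid and does not
change the configuration on that set. -/
lemma ValidSeq.filter {S : V → Prop} (hS : ∀ u w, 0 < E u w → S w → S u) {c c' : V → ℕ}
    {l : List V} (hl : ValidSeq E c l) (hc : ∀ u, S u → c' u = c u) :
    ValidSeq E c' (l.filter fun u => S u) ∧
      ∀ u, S u → fireList E c' (l.filter fun u => S u) u = fireList E c l u := by
  induction l generalizing c c' with
  | nil => exact ⟨trivial, hc⟩
  | cons v l ih =>
    by_cases hv : S v
    · rw [List.filter_cons_of_pos (by simpa using hv)]
      have hc' : ∀ u, S u → fire E c' v u = fire E c v u := fun u hu => by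
        simp only [fire, hc u hu, hc v hv]
      obtain ⟨h₁, h₂⟩ := ih hl.2 hc'
      exact ⟨⟨⟨hl.1.1, (hc v hv).symm ▸ hl.1.2⟩, h₁⟩, h₂⟩
    · rw [List.filter_cons_of_neg (by simpa using hv)]
      refine ih hl.2 fun u hu => ?_
      have hne : u ≠ v := fun h => hv (h ▸ hu)
      have h0 : E v u = 0 := by
        by_contra h0
        exact hv (hS v u (Nat.pos_of_ne_zero h0) hu)
      simp [fire, if_neg hne, h0, hc u hu]

end FiringSequences

/-- The order-theoretic content of a configuration space on a graph `E`: every element carries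
its firing counts and its set of firable vertices. -/
structure FiringLabelling {V : Type*} (E : V → V → ℕ) (L : Type*) [PartialOrder L] where
  /-- The number of times each vertex has fired. -/
  shot : L → V → ℕ
  /-- The firable vertices of an element. -/
  fir : L → V → Prop
  le_iff : ∀ a b, a ≤ b ↔ ∀ v, shot a v ≤ shot b v
  exists_succ : ∀ a v, fir a v → ∃ b, shot b = shot a + Pi.single v 1
  exists_fir_of_lt : ∀ a b, a < b → ∃ v, fir a v ∧ shot a v < shot b v
  fir_of_le : ∀ a b v, a ≤ b → fir a v → shot b v = shot a v → fir b v
  exists_max : ∀ a b, ∃ z, shot z = shot a ⊔ shot b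
  exists_restrict : ∀ a v, fir a v → ∃ a', fir a' v ∧
    ∀ u, shot a' u = if Relation.ReflTransGen (fun p q => 0 < E p q) u v then shot a u else 0

namespace FiringLabelling

variable {V : Type*} {E : V → V → ℕ} {L : Type*}

section PartialOrder

variable [PartialOrder L] (F : FiringLabelling E L)

lemma covBy_of_shot_eq {a b : L} {v : V} (h : F.shot b = F.shot a + Pi.single v 1) :
    a ⋖ b := by
  have hv : F.shot b v = F.shot a v + 1 := by simp [h]
  have hne : ∀ u, u ≠ v → F.shot b u = F.shot a u := fun u hu => by simp [h, hu]
  refine ⟨lt_of_le_of_ne ((F.le_iff _ _).2 fun u => by simp [h]) ?_, fun z haz hzb => ?_⟩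
  · rintro rfl
    omega
  · obtain ⟨w, -, hw⟩ := F.exists_fir_of_lt a z haz
    have hzb' := (F.le_iff _ _).1 hzb.le
    have haz' := (F.le_iff _ _).1 haz.le
    refine hzb.not_ge ((F.le_iff _ _).2 fun u => ?_)
    by_cases hwv : w = v
    · subst hwv
      by_cases huw : u = w
      · subst huw
        omega
      · exact hne u huw ▸ haz' u
    · have := hzb' w
      rw [hne w hwv] at this
      omega

lemma exists_fir_of_covBy {a b : L} (h : a ⋖ b) :
    ∃ v, F.fir a v ∧ F.shot b = F.shot a + Pi.single v 1 := by
  obtain ⟨v, hv, hlt⟩ := F.exists_fir_of_lt a b h.lt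
  obtain ⟨b', hb'⟩ := F.exists_succ a v hv
  have hle : b' ≤ b := (F.le_iff _ _).2 fun u => by
    rw [hb']
    by_cases huv : u = v
    · subst huv
      simpa using hlt
    · simpa [huv] using (F.le_iff _ _).1 h.le u
  have hcov := F.covBy_of_shot_eq hb'
  rcases hle.eq_or_lt with rfl | hlt'
  · exact ⟨v, hv, hb'⟩
  · exact (h.2 hcov.lt hlt').elim

/-- `v` is the only vertex firable at `m`. -/
def IsLabel (m : L) (v : V) : Prop := F.fir m v ∧ ∀ w, F.fir m w → w = v

variable {F}

lemma IsLabel.le_iff {m a : L} {v : V} (hm : F.IsLabel m v) :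
    a ≤ m ↔ F.shot a v ≤ F.shot m v := by
  refine ⟨fun h => (F.le_iff _ _).1 h v, fun h => ?_⟩
  obtain ⟨z, hz⟩ := F.exists_max a m
  have haz : a ≤ z := (F.le_iff _ _).2 fun u => by simp [hz]
  have hmz : m ≤ z := (F.le_iff _ _).2 fun u => by simp [hz]
  rcases hmz.eq_or_lt with rfl | hlt
  · exact haz
  · obtain ⟨w, hw, hlt'⟩ := F.exists_fir_of_lt m z hlt
    obtain rfl := hm.2 w hw
    rw [hz, Pi.sup_apply, sup_eq_right.2 h] at hlt'
    exact (lt_irrefl _ hlt').elim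

lemma IsLabel.eq {m m' : L} {v : V} (hm : F.IsLabel m v) (hm' : F.IsLabel m' v)
    (h : F.shot m v = F.shot m' v) : m = m' :=
  le_antisymm (hm'.le_iff.2 h.le) (hm.le_iff.2 h.ge)

lemma IsLabel.eq_of_separates {x y m : L} {u v : V} (hm : F.IsLabel m v) (hu : F.fir x u)
    (hy : F.shot y = F.shot x + Pi.single u 1) (hxm : x ≤ m) (hym : ¬ y ≤ m) :
    u = v ∧ F.shot x v = F.shot m v := by
  have hle := (F.le_iff _ _).1 hxm
  have heq : F.shot m u = F.shot x u := by
    by_contra hne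
    refine hym ((F.le_iff _ _).2 fun w => ?_)
    rw [hy]
    by_cases hwu : w = u
    · subst hwu
      have := hle w
      simp only [Pi.add_apply, Pi.single_eq_same]
      omega
    · simpa [hwu] using hle w
  obtain rfl := hm.2 u (F.fir_of_le x m u hxm hu heq)
  exact ⟨rfl, heq.symm⟩

end PartialOrder

variable [Lattice L] {F : FiringLabelling E L}

lemma exists_isLabel {m : L} (hm : MeetIrred m) : ∃ v, F.IsLabel m v := by
  obtain ⟨y, hy, huniq⟩ := hm
  obtain ⟨v, hv, hshot⟩ := F.exists_fir_of_covBy hy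
  refine ⟨v, hv, fun w hw => ?_⟩
  obtain ⟨z, hz⟩ := F.exists_succ m w hw
  obtain rfl := huniq z (F.covBy_of_shot_eq hz)
  rw [hshot] at hz
  have h := congrFun (add_left_cancel hz) w
  by_contra hne
  simp [hne] at h

lemma IsLabel.fir_of_msetDiff_eq {x y m : L} {v : V} (hm : F.IsLabel m v) (hxy : x ⋖ y)
    (h : MsetDiff x y = {m}) : F.fir x v ∧ F.shot x v = F.shot m v := by
  obtain ⟨u, hu, hy⟩ := F.exists_fir_of_covBy hxy
  have hmem : m ∈ MsetDiff x y := h ▸ rfl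
  obtain ⟨rfl, hs⟩ := hm.eq_of_separates hu hy hmem.2.1 hmem.2.2
  exact ⟨hu, hs⟩

lemma IsLabel.exists_msetDiff_eq {x m : L} {v : V} (hm : F.IsLabel m v) (hirr : MeetIrred m)
    (hx : F.fir x v) (hs : F.shot x v = F.shot m v) :
    ∃ y, x ⋖ y ∧ MsetDiff x y = {m} := by
  obtain ⟨y, hy⟩ := F.exists_succ x v hx
  refine ⟨y, F.covBy_of_shot_eq hy, Set.ext fun m' => ⟨fun h => ?_, ?_⟩⟩
  · obtain ⟨v', hv'⟩ := F.exists_isLabel h.1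
    obtain ⟨rfl, hs'⟩ := hv'.eq_of_separates hx hy h.2.1 h.2.2
    exact hv'.eq hm (hs'.symm.trans hs)
  · rintro rfl
    refine ⟨hirr, hm.le_iff.2 hs.le, fun hle => ?_⟩
    have := hm.le_iff.1 hle
    simp [hy, hs] at this

/-- An edge of `𝒢` either moves forward along the graph, or keeps the vertex and increases its
firing count. -/
lemma transGen_or_lt_of_gedge {m₁ m₂ : L} {v₁ v₂ : V} (h₁ : F.IsLabel m₁ v₁)
    (h₂ : F.IsLabel m₂ v₂) (h : Gedge m₁ m₂) :
    Relation.TransGen (fun p q => 0 < E p q) v₁ v₂ ∨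
      v₁ = v₂ ∧ F.shot m₁ v₁ < F.shot m₂ v₂ := by
  obtain ⟨-, hirr, a, ⟨⟨y, hay, hdiff⟩, hmin⟩, -, hna⟩ := h
  obtain ⟨hfir, hs⟩ := h₂.fir_of_msetDiff_eq hay hdiff
  obtain ⟨a', hfir', hshot'⟩ := F.exists_restrict a v₂ hfir
  have hs' : F.shot a' v₂ = F.shot m₂ v₂ := by
    rw [hshot', if_pos .refl, hs]
  have hle : a' ≤ a := (F.le_iff _ _).2 fun u => by
    rw [hshot']
    split_ifs <;> simp
  have hge : a ≤ a' := hmin (h₂.exists_msetDiff_eq hirr hfir' hs') hle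
  have hlt : F.shot m₁ v₁ < F.shot a v₁ := not_le.1 fun h => hna (h₁.le_iff.2 h)
  have hreach : Relation.ReflTransGen (fun p q => 0 < E p q) v₁ v₂ := by
    by_contra hn
    have := (F.le_iff _ _).1 hge v₁
    rw [hshot', if_neg hn] at this
    omega
  rcases Relation.reflTransGen_iff_eq_or_transGen.1 hreach with rfl | ht
  · exact .inr ⟨rfl, hs ▸ hlt⟩
  · exact .inl ht

theorem gAcyclic (F : FiringLabelling E L) (hE : AcyclicG E) : GAcyclic L := by
  have key : ∀ {m m' : L}, Relation.TransGen Gedge m m' → ∀ {v v' : V}, F.IsLabel m v →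
      F.IsLabel m' v' → Relation.TransGen (fun p q => 0 < E p q) v v' ∨
        v = v' ∧ F.shot m v < F.shot m' v' := by
    intro m m' h
    induction h with
    | single h => exact fun hv hv' => transGen_or_lt_of_gedge hv hv' h
    | tail _ hbc ih =>
      intro v v' hv hv'
      obtain ⟨w, hw⟩ := F.exists_isLabel hbc.1
      rcases ih hv hw, transGen_or_lt_of_gedge hw hv' hbc with ⟨h | ⟨rfl, h⟩, h' | ⟨rfl, h'⟩⟩
      · exact .inl (h.trans h')
      · exact .inl h
      · exact .inl h'
      · exact .inr ⟨rfl, h.trans h'⟩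
  intro m hm
  obtain ⟨m', hm', -⟩ := Relation.TransGen.head'_iff.1 hm
  obtain ⟨v, hv⟩ := F.exists_isLabel hm'.1
  rcases key hm hv hv with h | ⟨-, h⟩
  · exact hE v h
  · exact lt_irrefl _ h

end FiringLabelling

/-- The configuration space of a game on an acyclic graph carries a firing labelling. -/
theorem Generates.nonempty_firingLabelling {L : Type*} [PartialOrder L] {V : Type*} [Finite V]
    {E : V → V → ℕ} {O : V → ℕ} (hE : AcyclicG E) (hgen : Generates E O L) :
    Nonempty (FiringLabelling E L) := by
  have := Fintype.ofFinite V
  obtain ⟨f, hf⟩ := hgen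
  choose seq hvalid hfinal using fun a => (f a).2
  have count_of_reach : ∀ {a b : L} {l : List V}, ValidSeq E (f a).1 l →
      fireList E (f a).1 l = (f b).1 →
        ∀ v, (seq b).count v = (seq a).count v + l.count v := by
    intro a b l hl hlb v
    have hv : ValidSeq E O (seq a ++ l) := validSeq_append.2 ⟨hvalid a, (hfinal a).symm ▸ hl⟩
    rw [← List.count_append]
    refine hE.count_eq (hvalid b) hv ?_ v
    rw [hfinal, fireList_append, hfinal, hlb]
  have exists_of_valid : ∀ {l : List V}, ValidSeq E O l →
      ∃ b, (f b).1 = fireList E O l ∧ ∀ v, (seq b).count v = l.count v := by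
    intro l hl
    have hb : (f (f.symm ⟨fireList E O l, l, hl, rfl⟩)).1 = fireList E O l := by simp
    exact ⟨_, hb, hE.count_eq (hvalid _) hl ((hfinal _).trans hb)⟩
  refine ⟨{
    shot := fun a v => (seq a).count v
    fir := fun a v => Firable E (f a).1 v
    le_iff := fun a b => ⟨?_, fun h => ?_⟩
    exists_succ := fun a v hv => ?_
    exists_fir_of_lt := fun a b hab => ?_
    fir_of_le := fun a b v hab hv hs => ?_
    exists_max := fun a b => ?_
    exists_restrict := fun a v hv => ?_ }⟩
  · intro h v
    obtain ⟨l, hl, hlb⟩ := (hf a b).1 h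
    have := count_of_reach hl hlb v
    omega
  · obtain ⟨l, hl, hc⟩ := (hvalid a).exists_merge (hvalid b)
    refine (hf a b).2 ⟨l, hfinal a ▸ (validSeq_append.1 hl).2, ?_⟩
    rw [← hfinal a, ← fireList_append, ← hfinal b]
    refine fireList_eq_of_count_eq hl (hvalid b) fun v => ?_
    have := h v
    rw [List.count_append, hc]
    omega
  · have hl : ValidSeq E O (seq a ++ [v]) :=
      validSeq_append.2 ⟨hvalid a, by simpa [ValidSeq, hfinal] using hv⟩
    obtain ⟨b, -, hb⟩ := exists_of_valid hl
    refine ⟨b, funext fun u => ?_⟩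
    rw [hb, List.count_append, Pi.add_apply, Pi.single_apply, List.count_singleton]
    simp only [beq_iff_eq, eq_comm (a := v)]
  · obtain ⟨l, hl, hlb⟩ := (hf a b).1 hab.le
    cases l with
    | nil => exact (hab.ne (f.injective (Subtype.ext hlb))).elim
    | cons v l =>
      refine ⟨v, hl.1, ?_⟩
      have := count_of_reach hl hlb v
      rw [List.count_cons_self] at this
      omega
  · obtain ⟨l, hl, hlb⟩ := (hf a b).1 hab
    have := count_of_reach hl hlb v
    refine ⟨hv.1, hv.2.trans ?_⟩
    rw [← hlb]
    exact le_fireList_of_count_eq_zero (by omega)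
  · obtain ⟨l, hl, hc⟩ := (hvalid a).exists_merge (hvalid b)
    obtain ⟨z, -, hz⟩ := exists_of_valid hl
    refine ⟨z, funext fun v => ?_⟩
    rw [hz, List.count_append, hc, Pi.sup_apply]
    omega
  · have hS : ∀ u w, 0 < E u w → Relation.ReflTransGen (fun p q => 0 < E p q) w v →
        Relation.ReflTransGen (fun p q => 0 < E p q) u v := fun u w h hw => hw.head h
    obtain ⟨h₁, h₂⟩ := (hvalid a).filter hS (c' := O) fun _ _ => rfl
    obtain ⟨a', ha', hc⟩ := exists_of_valid h₁
    refine ⟨a', ⟨hv.1, ?_⟩, fun u => ?_⟩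
    · rw [ha', h₂ v .refl, hfinal]
      exact hv.2
    · rw [hc]
      split_ifs with hu
      · exact List.count_filter (by simpa using hu)
      · exact List.count_eq_zero_of_not_mem fun hm => hu (by simpa using (List.mem_filter.1 hm).2)

/-- if a finite ULD lattice `L` is generated by a CFG on an acyclic
directed multigraph reaching a unique fixed point, then the directed graph `𝒢` on the
meet-irreducibles of `L` is acyclic. -/
theorem stmt14 {L : Type*} [Lattice L] [Fintype L] [BoundedOrder L]
    (hULD : IsULD L)
    {V : Type*} [Finite V] (E : V → V → ℕ) (O : V → ℕ)
    (hacyc : AcyclicG E) (hUFP : ReachesUFP E O) (hgen : Generates E O L) :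
    GAcyclic L :=
  let ⟨F⟩ := hgen.nonempty_firingLabelling hacyc
  F.gAcyclic hacyc
end

section
/- In a finite ULD lattice L, every maximal chain from ⊥ to ⊤ has length equal to the number of meet-irreducibles of L: if ⊥ = c₀ ⋖ c₁ ⋖ ⋯ ⋖ c_N = ⊤ is a chain of covers, then N = |M|. -/
open Classical

section ULD

variable {L : Type*} [Lattice L]

theorem CovBy.inf_eq_of_ne {x y z : L} (hy : x ⋖ y) (hz : x ⋖ z) (h : y ≠ z) : y ⊓ z = x :=
  (hy.eq_or_eq (le_inf hy.le hz.le) inf_le_left).resolve_right fun hyz =>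
    (hz.eq_or_eq hy.le (inf_eq_left.1 hyz)).elim hy.ne' h

theorem MnotAbove_bot [OrderBot L] : MnotAbove (⊥ : L) = ∅ := by
  simp [MnotAbove]

theorem MnotAbove_top [OrderTop L] : MnotAbove (⊤ : L) = {m | MeetIrred m} := by
  ext m
  refine ⟨And.left, fun hm => ⟨hm, fun h => ?_⟩⟩
  obtain ⟨y, hy, -⟩ := hm
  exact hy.lt.not_ge (le_top.trans h)

variable [Fintype L]

theorem CovBy.le_uplus [OrderBot L] {x y : L} (h : x ⋖ y) : y ≤ uplus x := by
  simpa [uplus, h] using Finset.le_sup (f := fun y => if x ⋖ y then y else ⊥) (Finset.mem_univ y)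

/-- Distributivity of the interval `[x, x⁺]` in an upper locally distributive lattice. -/
theorem IsULD.inf_sup_le [BoundedOrder L] (hL : IsULD L) {x a b c : L} (hx : x ≠ ⊤)
    (ha : a ∈ Set.Icc x (uplus x)) (hb : b ∈ Set.Icc x (uplus x))
    (hc : c ∈ Set.Icc x (uplus x)) : a ⊓ (b ⊔ c) ≤ (a ⊓ b) ⊔ (a ⊓ c) := by
  obtain ⟨n, ⟨e⟩⟩ := hL x hx
  have key : ∀ u v w : Set.Icc x (uplus x), u ⊓ (v ⊔ w) ≤ (u ⊓ v) ⊔ (u ⊓ w) := fun u v w => by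
    rw [← e.le_iff_le]
    simp only [map_inf, map_sup, inf_sup_left, le_refl]
  exact key ⟨a, ha⟩ ⟨b, hb⟩ ⟨c, hc⟩

theorem IsULD.covBy_sup [BoundedOrder L] (hL : IsULD L) {x y z : L} (hy : x ⋖ y) (hz : x ⋖ z)
    (h : y ≠ z) : z ⋖ z ⊔ y := by
  refine ⟨left_lt_sup.2 fun hyz => (hz.eq_or_eq hy.le hyz).elim hy.ne' h, fun t hzt hty => ?_⟩
  have ht : t ∈ Set.Icc x (uplus x) :=
    ⟨hz.le.trans hzt.le, hty.le.trans (sup_le hz.le_uplus hy.le_uplus)⟩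
  have hd := hL.inf_sup_le hy.lt.ne_top ht ⟨hz.le, hz.le_uplus⟩ ⟨hy.le, hy.le_uplus⟩
  rw [inf_eq_left.2 hty.le] at hd
  rcases hy.eq_or_eq (le_inf ht.1 hy.le) (inf_le_right : t ⊓ y ≤ y) with h' | h'
  · rw [h'] at hd
    exact hzt.not_ge (hd.trans (sup_le inf_le_right hz.le))
  · exact hty.not_ge (sup_le hzt.le (inf_eq_right.1 h'))

theorem IsULD.not_le_sup [BoundedOrder L] (hL : IsULD L) {x y z w : L} (hy : x ⋖ y) (hz : x ⋖ z)
    (hw : x ⋖ w) (hyz : y ≠ z) (hyw : y ≠ w) : ¬ y ≤ z ⊔ w := by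
  intro hle
  have hd := hL.inf_sup_le hy.lt.ne_top ⟨hy.le, hy.le_uplus⟩ ⟨hz.le, hz.le_uplus⟩
    ⟨hw.le, hw.le_uplus⟩
  rw [inf_eq_left.2 hle, hy.inf_eq_of_ne hz hyz, hy.inf_eq_of_ne hw hyw, sup_idem] at hd
  exact hy.lt.not_ge hd

theorem exists_mem_MsetDiff {x y : L} (h : ¬ y ≤ x) : ∃ m, m ∈ MsetDiff x y := by
  obtain ⟨m, hxm, hm⟩ := (Set.toFinite {z : L | ¬ y ≤ z}).exists_le_maximal h
  have above : ∀ z, m < z → y ≤ z := fun z hz => not_not.1 fun hyz => hm.not_gt hyz hz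
  have hlt : m < m ⊔ y := left_lt_sup.2 hm.prop
  have hmin : ∀ z, m < z → m ⊔ y ≤ z := fun z hz => sup_le hz.le (above z hz)
  exact ⟨m, ⟨m ⊔ y, ⟨hlt, fun z hz => (hmin z hz).not_gt⟩, fun z hz =>
    ((hz.eq_or_eq hlt.le (hmin z hz.lt)).resolve_left hlt.ne').symm⟩, hxm, hm.prop⟩

theorem exists_covBy_le_of_mem_MsetDiff {x y m : L} (hy : x ⋖ y) (hm : m ∈ MsetDiff x y)
    (h : ∃ m' ∈ MsetDiff x y, m' ≠ m) : ∃ z, x ⋖ z ∧ z ≤ m ∧ y ≠ z := by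
  have hlt : x < m := by
    refine lt_of_le_of_ne hm.2.1 ?_
    rintro rfl
    obtain ⟨m', hm', hne⟩ := h
    obtain ⟨z, hz, hzm⟩ := exists_covBy_le_of_lt (lt_of_le_of_ne hm'.2.1 hne.symm)
    exact hm'.2.2 (hm.1.unique hy hz ▸ hzm)
  obtain ⟨z, hz, hzm⟩ := exists_covBy_le_of_lt hlt
  exact ⟨z, hz, hzm, fun h => hm.2.2 (h ▸ hzm)⟩

theorem IsULD.subsingleton_MsetDiff [BoundedOrder L] (hL : IsULD L) {x y : L} (hy : x ⋖ y) :
    (MsetDiff x y).Subsingleton := by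
  induction x using WellFoundedGT.induction generalizing y with
  | ind x ih =>
    intro m₁ h₁ m₂ h₂
    by_contra hne
    obtain ⟨z₁, hz₁, hzm₁, hy₁⟩ := exists_covBy_le_of_mem_MsetDiff hy h₁ ⟨m₂, h₂, Ne.symm hne⟩
    obtain ⟨z₂, hz₂, hzm₂, hy₂⟩ := exists_covBy_le_of_mem_MsetDiff hy h₂ ⟨m₁, h₁, hne⟩
    obtain ⟨m, hm, hzm, hym⟩ := exists_mem_MsetDiff (hL.not_le_sup hy hz₁ hz₂ hy₁ hy₂)
    have eq_of_covBy : ∀ z m', x ⋖ z → y ≠ z → z ≤ m → z ≤ m' → m' ∈ MsetDiff x y → m = m' :=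
      fun z m' hz hyz hzm hzm' hm' => ih z hz.lt (hL.covBy_sup hy hz hyz)
        ⟨hm, hzm, fun h => hym (le_sup_right.trans h)⟩
        ⟨hm'.1, hzm', fun h => hm'.2.2 (le_sup_right.trans h)⟩
    exact hne ((eq_of_covBy z₁ m₁ hz₁ hy₁ (le_sup_left.trans hzm) hzm₁ h₁).symm.trans
      (eq_of_covBy z₂ m₂ hz₂ hy₂ (le_sup_right.trans hzm) hzm₂ h₂))

theorem IsULD.ncard_MnotAbove_of_covBy [BoundedOrder L] (hL : IsULD L) {x y : L} (hy : x ⋖ y) :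
    (MnotAbove y).ncard = (MnotAbove x).ncard + 1 := by
  obtain ⟨m, hm⟩ := exists_mem_MsetDiff hy.lt.not_ge
  have hins : MnotAbove y = insert m (MnotAbove x) := by
    ext k
    constructor
    · intro hk
      by_cases hxk : x ≤ k
      · exact Or.inl (hL.subsingleton_MsetDiff hy ⟨hk.1, hxk, hk.2⟩ hm)
      · exact Or.inr ⟨hk.1, hxk⟩
    · rintro (rfl | hk)
      · exact ⟨hm.1, hm.2.2⟩
      · exact ⟨hk.1, fun h => hk.2 (hy.le.trans h)⟩
  rw [hins, Set.ncard_insert_of_notMem fun h => h.2 hm.2.1]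

end ULD

/-- in a finite ULD lattice `L`, every maximal chain from `⊥` to `⊤` has
length equal to the number of meet-irreducibles of `L`. -/
theorem stmt17 {L : Type*} [Lattice L] [Fintype L] [BoundedOrder L]
    (hULD : IsULD L) (N : ℕ) (c : ℕ → L)
    (h0 : c 0 = ⊥) (hN : c N = ⊤) (hchain : ∀ i < N, c i ⋖ c (i + 1)) :
    N = Nat.card {m : L // MeetIrred m} := by
  have key : ∀ k ≤ N, (MnotAbove (c k)).ncard = k := by
    intro k
    induction k with
    | zero => simp [h0, MnotAbove_bot]
    | succ k ih =>
      intro hk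
      rw [hULD.ncard_MnotAbove_of_covBy (hchain k hk), ih (Nat.le_of_succ_le hk)]
  rw [← key N le_rfl, hN, MnotAbove_top]
  rfl
end
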